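/- (Theorem 2, finite-dimensional marginal form.) Let K ≥ 1, m ≥ 1, ν > 0, let t_1,…,t_m ∈ ℝ, and let Σ : Fin K → Fin m → Fin m → ℝ with Σ_{j,j'} t_j t_{j'} ∏_{k=1}^K Σ k j j' > 0. Suppose for each r ∈ ℕ we are given a dimension d_r ≥ 1 and feature vectors a^{(r)}_{j,k} ∈ ℝ^{d_r} (j = 1,…,m, k = 1,…,K) such that for all k, j, j', ⟨a^{(r)}_{j,k}, a^{(r)}_{j',k}⟩ → Σ k j j' as r → ∞. Let ρ_r be the product of (i) the product measure on Z : (∏_{k=1}^K Fin d_r) → ℝ with all factors standard Gaussian N(0,1) and (ii) the Gamma distribution with shape ν/2 and rate ν/2 on (0,∞), and let μ_r be the pushforward of ρ_r under (Z, τ) ↦ (1/√τ) · Σ_{j=1}^m t_j Σ_{i} Z(i) ∏_{k=1}^K a^{(r)}_{j,k}(i_k). Then μ_r converges weakly, as r → ∞, to the probability measure on ℝ with Student t density with ν degrees of freedom and scale s = √(Σ_{j,j'} t_j t_{j'} ∏_{k=1}^K Σ k j j'). -/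

import Mathlib

open scoped BigOperators NNReal
open MeasureTheory ProbabilityTheory Filter
open scoped Matrix Topology

/-! For `Z ∼ N(0, v)` independent of the Gamma variable `τ`, the ratio `Z / √τ` is, given `τ`,
centred Gaussian with variance `v / τ`. The Gamma family is conjugate to the precision of a centred
Gaussian: the product of the two densities is the Student t density in `x` times a Gamma density in
`τ`, so integrating out `τ` leaves the former. A linear combination of Tucker entries is a linear
form in the Gaussian core, and its variance factorises over the modes into inner products of feature
vectors. Hence a finite-rank marginal is itself Student t as soon as its variance is positive, and
only its squared scale moves; the limit follows from weak continuity of the Student t law in its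
scale. -/

section Measure

variable {α β γ δ : Type*} [MeasurableSpace α] [MeasurableSpace β] [MeasurableSpace γ]
  [MeasurableSpace δ]

theorem map_prod_map_left (μ : Measure α) (ρ : Measure β) [SFinite μ] [SFinite ρ] {g : α → δ}
    {F : δ × β → γ} (hg : Measurable g) (hF : Measurable F) :
    ((μ.map g).prod ρ).map F = (μ.prod ρ).map fun p => F (g p.1, p.2) := by
  have hprod : (μ.map g).prod ρ = (μ.prod ρ).map (Prod.map g id) := by
    rw [← Measure.map_prod_map μ ρ hg measurable_id, Measure.map_id]
  rw [hprod, Measure.map_map hF (hg.prodMap measurable_id)]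
  rfl

theorem map_prod_eq_withDensity_lintegral {μ : Measure α} {ρ : Measure β} {η : Measure γ}
    [SFinite μ] [SFinite ρ] [SFinite η] {F : α × β → γ} (hF : Measurable F) {p : β → γ → ENNReal}
    (hp : Measurable (Function.uncurry p))
    (h : ∀ᵐ b ∂ρ, μ.map (fun x => F (x, b)) = η.withDensity (p b)) :
    (μ.prod ρ).map F = η.withDensity fun y => ∫⁻ b, p b y ∂ρ := by
  ext s hs
  rw [Measure.map_apply hF hs, Measure.prod_apply_symm (hF hs), withDensity_apply _ hs,
    ← lintegral_lintegral_swap hp.aemeasurable]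
  refine lintegral_congr_ae (h.mono fun b hb => ?_)
  beta_reduce
  rw [← withDensity_apply _ hs, ← hb, Measure.map_apply (by fun_prop) hs]
  rfl

theorem continuous_integral_map_const_smul {M E : Type*} [TopologicalSpace M]
    [FirstCountableTopology M] [TopologicalSpace E] [MeasurableSpace E] [BorelSpace E] [SMul M E]
    [ContinuousSMul M E] (μ : Measure E) [IsFiniteMeasure μ] (f : BoundedContinuousFunction E ℝ) :
    Continuous fun c : M => ∫ y, f y ∂μ.map (c • ·) := by
  have hmap (c : M) : ∫ y, f y ∂μ.map (c • ·) = ∫ y, f (c • y) ∂μ :=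
    integral_map (by fun_prop) f.continuous.measurable.aestronglyMeasurable
  simp only [hmap]
  refine continuous_of_dominated (bound := fun _ => ‖f‖) (fun c => ?_)
    (fun c => ae_of_all _ fun y => f.norm_coe_le_norm _) (integrable_const _)
    (ae_of_all _ fun y => by fun_prop)
  exact Measurable.aestronglyMeasurable (by fun_prop)

end Measure

theorem pi_gaussianReal_map_sum_mul {ι : Type*} [Fintype ι] (μ : ι → ℝ) (v : ι → ℝ≥0) (c : ι → ℝ) :
    (Measure.pi fun i => gaussianReal (μ i) (v i)).map (fun z => ∑ i, z i * c i) =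
      gaussianReal (∑ i, μ i * c i) (∑ i, v i * c i ^ 2).toNNReal := by
  have hlaw : HasGaussianLaw (fun z : ι → ℝ => ∑ i, z i * c i)
      (Measure.pi fun i => gaussianReal (μ i) (v i)) := by
    have hcoord (i : ι) : HasGaussianLaw (fun z : ι → ℝ => z i * c i)
        (Measure.pi fun i => gaussianReal (μ i) (v i)) :=
      ((measurePreserving_eval _ i).hasLaw.hasGaussianLaw.fun_smul (c i)).congr
        (ae_of_all _ fun z => mul_comm _ _)
    exact (iIndepFun.hasGaussianLaw hcoord
      (iIndepFun_pi (X := fun i x => x * c i) fun i => by fun_prop)).fun_sum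
  have hmean : (Measure.pi fun i => gaussianReal (μ i) (v i))[fun z : ι → ℝ => ∑ i, z i * c i] =
      ∑ i, μ i * c i := by
    rw [integral_finsetSum]
    · simp [integral_mul_const, integral_eval]
    · exact fun i _ => (integrable_eval IsGaussian.integrable_id).mul_const _
  have hvar : Var[fun z : ι → ℝ => ∑ i, z i * c i; Measure.pi fun i => gaussianReal (μ i) (v i)] =
      ∑ i, v i * c i ^ 2 := by
    rw [← Finset.sum_fn, variance_sum_pi (X := fun i x => x * c i)
      fun i => IsGaussian.memLp_two_id.mul_const (c i)]
    simp only [variance_mul_const, ← Function.id_def, variance_id_gaussianReal]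
  rw [hlaw.map_eq_gaussianReal, hmean, hvar]

section StudentT

/-- The Student t density with `ν` degrees of freedom. Like `gaussianPDFReal`, it is parametrised
by the squared scale `v = s ^ 2`; it is only meaningful for `0 < ν` and `0 < v`. -/
noncomputable def studentTPDFReal (ν v x : ℝ) : ℝ :=
  Real.Gamma ((ν + 1) / 2) / (Real.Gamma (ν / 2) * √(ν * Real.pi) * √v) *
    (1 + x ^ 2 / (ν * v)) ^ (-((ν + 1) / 2))

/-- The Student t distribution with `ν` degrees of freedom and squared scale `v`. -/
noncomputable def studentT (ν v : ℝ) : Measure ℝ :=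
  volume.withDensity fun x => ENNReal.ofReal (studentTPDFReal ν v x)

theorem studentTPDFReal_nonneg {ν v : ℝ} (hν : 0 < ν) (hv : 0 ≤ v) (x : ℝ) :
    0 ≤ studentTPDFReal ν v x := by
  unfold studentTPDFReal
  positivity

theorem studentTPDFReal_two_mul {a r v : ℝ} (ha : 0 < a) (hr : 0 < r) (hv : 0 < v) (x : ℝ) :
    studentTPDFReal (2 * a) (v * r / a) x =
      r ^ a * Real.Gamma (a + 1 / 2) /
        (Real.Gamma a * √(2 * Real.pi * v) * (r + x ^ 2 / (2 * v)) ^ (a + 1 / 2)) := by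
  have hroot : √(2 * a * Real.pi) * √(v * r / a) = √(2 * Real.pi * v) * √r := by
    rw [← Real.sqrt_mul (by positivity), ← Real.sqrt_mul (by positivity)]
    congr 1
    field_simp
  have hbase : 1 + x ^ 2 / (2 * a * (v * r / a)) = (r + x ^ 2 / (2 * v)) / r := by
    field_simp
  have hpow : r ^ (a + 1 / 2) = r ^ a * √r := by
    rw [Real.rpow_add hr, Real.sqrt_eq_rpow]
  rw [studentTPDFReal, mul_assoc (Real.Gamma _), hroot, hbase,
    show (2 * a + 1) / 2 = a + 1 / 2 by ring, show 2 * a / 2 = a by ring,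
    Real.rpow_neg (by positivity), Real.div_rpow (by positivity) hr.le, hpow]
  field_simp

theorem gaussianPDFReal_zero_div_toNNReal (v : ℝ≥0) {τ : ℝ} (hτ : 0 ≤ τ) (x : ℝ) :
    gaussianPDFReal 0 (v / τ.toNNReal) x =
      √τ / √(2 * Real.pi * v) * Real.exp (-(x ^ 2 / (2 * v) * τ)) := by
  rw [gaussianPDFReal, NNReal.coe_div, Real.coe_toNNReal τ hτ, ← mul_div_assoc,
    Real.sqrt_div (by positivity), inv_div, sub_zero]
  congr 2
  field_simp

/-- Conjugacy: the prior `Gamma(a, r)` on the precision becomes `Gamma(a + 1/2, r + x² / 2v)` after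
observing `x`. The factor that does not involve `τ` is the marginal density of `x`. -/
theorem gammaPDFReal_mul_gaussianPDFReal {a r τ : ℝ} {v : ℝ≥0} (ha : 0 < a) (hr : 0 < r)
    (hv : v ≠ 0) (hτ : 0 < τ) (x : ℝ) :
    gammaPDFReal a r τ * gaussianPDFReal 0 (v / τ.toNNReal) x =
      studentTPDFReal (2 * a) (v * r / a) x *
        gammaPDFReal (a + 1 / 2) (r + x ^ 2 / (2 * v)) τ := by
  have hv' : (0 : ℝ) < v := by positivity
  have hpow : τ ^ (a + 1 / 2 - 1) = τ ^ (a - 1) * √τ := by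
    rw [Real.sqrt_eq_rpow, ← Real.rpow_add hτ]
    ring_nf
  have hexp : Real.exp (-((r + x ^ 2 / (2 * v)) * τ)) =
      Real.exp (-(r * τ)) * Real.exp (-(x ^ 2 / (2 * v) * τ)) := by
    rw [← Real.exp_add]
    ring_nf
  rw [gaussianPDFReal_zero_div_toNNReal v hτ.le, studentTPDFReal_two_mul ha hr hv', gammaPDFReal,
    gammaPDFReal, if_pos hτ.le, if_pos hτ.le, hpow, hexp]
  field_simp

theorem lintegral_gaussianPDF_gammaMeasure {a r : ℝ} {v : ℝ≥0} (ha : 0 < a) (hr : 0 < r)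
    (hv : v ≠ 0) (x : ℝ) :
    ∫⁻ τ, gaussianPDF 0 (v / τ.toNNReal) x ∂gammaMeasure a r =
      ENNReal.ofReal (studentTPDFReal (2 * a) (v * r / a) x) := by
  have hgamma (b s : ℝ) : Measurable (gammaPDF b s) :=
    (measurable_gammaPDFReal b s).ennreal_ofReal
  have hconj : ∀ᵐ τ : ℝ, gammaPDF a r τ * gaussianPDF 0 (v / τ.toNNReal) x =
      ENNReal.ofReal (studentTPDFReal (2 * a) (v * r / a) x) *
        gammaPDF (a + 1 / 2) (r + x ^ 2 / (2 * v)) τ := by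
    filter_upwards [Measure.ae_ne volume 0] with τ hτ
    rcases hτ.lt_or_gt with hneg | hpos
    · simp [gammaPDF_of_neg hneg]
    · rw [gammaPDF, gaussianPDF, gammaPDF, ← ENNReal.ofReal_mul (gammaPDFReal_nonneg ha hr τ),
        gammaPDFReal_mul_gaussianPDFReal ha hr hv hpos,
        ENNReal.ofReal_mul (studentTPDFReal_nonneg (by positivity) (by positivity) x)]
  rw [gammaMeasure, lintegral_withDensity_eq_lintegral_mul _ (hgamma a r)
    (by unfold gaussianPDF gaussianPDFReal; fun_prop)]
  simp only [Pi.mul_apply]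
  rw [lintegral_congr_ae hconj, lintegral_const_mul _ (hgamma _ _),
    lintegral_gammaPDF_eq_one (by positivity) (by positivity), mul_one]

theorem gammaMeasure_ae_pos (a r : ℝ) : ∀ᵐ τ ∂gammaMeasure a r, 0 < τ := by
  simp only [ae_iff, not_lt]
  change gammaMeasure a r (Set.Iic 0) = 0
  rw [gammaMeasure, withDensity_apply _ measurableSet_Iic,
    setLIntegral_congr Iio_ae_eq_Iic.symm, lintegral_gammaPDF_of_nonpos le_rfl]

theorem gaussianReal_zero_map_inv_sqrt_mul (v : ℝ≥0) (τ : ℝ) :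
    (gaussianReal 0 v).map (fun z => 1 / √τ * z) = gaussianReal 0 (v / τ.toNNReal) := by
  rw [gaussianReal_map_const_mul, mul_zero]
  congr 1
  ext
  simp [div_eq_inv_mul, Real.sq_sqrt']

theorem gaussianReal_prod_gammaMeasure_map {a r : ℝ} {v : ℝ≥0} (ha : 0 < a) (hr : 0 < r)
    (hv : v ≠ 0) :
    ((gaussianReal 0 v).prod (gammaMeasure a r)).map (fun p => 1 / √p.2 * p.1) =
      studentT (2 * a) (v * r / a) := by
  have := isProbabilityMeasure_gammaMeasure ha hr
  simp only [studentT, ← lintegral_gaussianPDF_gammaMeasure ha hr hv]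
  refine map_prod_eq_withDensity_lintegral (by fun_prop)
    (by unfold Function.uncurry gaussianPDF gaussianPDFReal; fun_prop) ?_
  filter_upwards [gammaMeasure_ae_pos a r] with τ hτ
  rw [gaussianReal_zero_map_inv_sqrt_mul, gaussianReal_of_var_ne_zero _ (by positivity)]

variable {ν v : ℝ}

theorem studentT_eq_map (hν : 0 < ν) (hv : 0 < v) :
    studentT ν v = ((gaussianReal 0 v.toNNReal).prod (gammaMeasure (ν / 2) (ν / 2))).map
      (fun p => 1 / √p.2 * p.1) := by
  rw [gaussianReal_prod_gammaMeasure_map (by positivity) (by positivity) (by simpa using hv),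
    Real.coe_toNNReal v hv.le, mul_div_cancel_right₀ _ (by positivity),
    mul_div_cancel₀ ν two_ne_zero]

theorem isProbabilityMeasure_studentT (hν : 0 < ν) (hv : 0 < v) :
    IsProbabilityMeasure (studentT ν v) := by
  have := isProbabilityMeasure_gammaMeasure (half_pos hν) (half_pos hν)
  rw [studentT_eq_map hν hv]
  exact Measure.isProbabilityMeasure_map (by fun_prop)

theorem studentT_map_const_mul (hν : 0 < ν) (hv : 0 < v) {c : ℝ} (hc : c ≠ 0) :
    (studentT ν v).map (c * ·) = studentT ν (c ^ 2 * v) := by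
  have := isProbabilityMeasure_gammaMeasure (half_pos hν) (half_pos hν)
  have hgauss : gaussianReal 0 (c ^ 2 * v).toNNReal = (gaussianReal 0 v.toNNReal).map (c * ·) := by
    rw [gaussianReal_map_const_mul, mul_zero, Real.toNNReal_mul (sq_nonneg c),
      Real.toNNReal_of_nonneg (sq_nonneg c)]
  rw [studentT_eq_map hν hv, studentT_eq_map hν (by positivity), hgauss,
    map_prod_map_left _ _ (by fun_prop) (by fun_prop), Measure.map_map (by fun_prop) (by fun_prop)]
  congr 1
  ext p
  simp [mul_left_comm]

theorem continuousAt_integral_studentT (hν : 0 < ν) (hv : 0 < v)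
    (f : BoundedContinuousFunction ℝ ℝ) :
    ContinuousAt (fun w => ∫ y, f y ∂studentT ν w) v := by
  have := isProbabilityMeasure_studentT hν one_pos
  have hscale : (fun w => ∫ y, f y ∂(studentT ν 1).map (√w • ·)) =ᶠ[𝓝 v]
      fun w => ∫ y, f y ∂studentT ν w := by
    filter_upwards [lt_mem_nhds hv] with w hw
    simp only [smul_eq_mul]
    rw [studentT_map_const_mul hν one_pos (Real.sqrt_ne_zero'.2 hw), Real.sq_sqrt hw.le, mul_one]
  exact ((continuous_integral_map_const_smul (studentT ν 1) f).comp
    Real.continuous_sqrt).continuousAt.congr hscale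

end StudentT

section Tucker

variable {ι κ R : Type*} [Fintype ι] [Fintype κ]

/-- The quadratic form `tᵀ H t` of the entrywise product `H = ⨀ₖ Σ⁽ᵏ⁾`. For covariance matrices
`Σ⁽ᵏ⁾` it is the variance (for the Student t law, the squared scale) of `∑ⱼ tⱼ g(u_j)`. -/
def hadamardQuadForm [CommSemiring R] (t : ι → R) (Sig : κ → ι → ι → R) : R :=
  ∑ j, ∑ j', t j * t j' * ∏ k, Sig k j j'

/-- The entry of the Tucker tensor with core `Z` at the point whose feature vector in mode `k`
is `b k`. -/
def tuckerEntry {α : κ → Type*} [DecidableEq κ] [∀ k, Fintype (α k)] [CommSemiring R]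
    (Z : (∀ k, α k) → R) (b : ∀ k, α k → R) : R :=
  ∑ i, Z i * ∏ k, b k (i k)

theorem tendsto_hadamardQuadForm [CommSemiring R] [TopologicalSpace R] [IsTopologicalSemiring R]
    {X : Type*} {l : Filter X} (t : ι → R) {A : X → κ → ι → ι → R} {Sig : κ → ι → ι → R}
    (h : ∀ k j j', Tendsto (fun x => A x k j j') l (𝓝 (Sig k j j'))) :
    Tendsto (fun x => hadamardQuadForm t (A x)) l (𝓝 (hadamardQuadForm t Sig)) :=
  tendsto_finsetSum _ fun j _ => tendsto_finsetSum _ fun j' _ =>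
    (tendsto_finsetProd _ fun k _ => h k j j').const_mul _

variable [DecidableEq κ] {α : κ → Type*} [∀ k, Fintype (α k)]

theorem sum_mul_tuckerEntry [CommSemiring R] (t : ι → R) (a : ι → ∀ k, α k → R)
    (Z : (∀ k, α k) → R) :
    ∑ j, t j * tuckerEntry Z (a j) = ∑ i, Z i * ∑ j, t j * ∏ k, a j k (i k) := by
  simp only [tuckerEntry, Finset.mul_sum]
  rw [Finset.sum_comm]
  simp only [mul_left_comm]

theorem sum_sq_sum_mul_prod [CommSemiring R] (t : ι → R) (a : ι → ∀ k, α k → R) :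
    ∑ i : ∀ k, α k, (∑ j, t j * ∏ k, a j k (i k)) ^ 2 =
      hadamardQuadForm t fun k j j' => a j k ⬝ᵥ a j' k := by
  have hpair (j j' : ι) : ∑ i : ∀ k, α k, (t j * ∏ k, a j k (i k)) * (t j' * ∏ k, a j' k (i k)) =
      t j * t j' * ∏ k, a j k ⬝ᵥ a j' k := by
    simp only [dotProduct, Fintype.prod_sum, Finset.prod_mul_distrib, Finset.mul_sum,
      mul_mul_mul_comm]
  simp only [sq, Finset.sum_mul_sum, hadamardQuadForm, ← hpair]
  rw [Finset.sum_comm]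
  exact Finset.sum_congr rfl fun j _ => Finset.sum_comm

theorem pi_gaussianReal_map_sum_tuckerEntry (t : ι → ℝ) (a : ι → ∀ k, α k → ℝ) :
    (Measure.pi fun _ : ∀ k, α k => gaussianReal 0 1).map
        (fun Z => ∑ j, t j * tuckerEntry Z (a j)) =
      gaussianReal 0 (hadamardQuadForm t fun k j j' => a j k ⬝ᵥ a j' k).toNNReal := by
  simp only [sum_mul_tuckerEntry, pi_gaussianReal_map_sum_mul, zero_mul, Finset.sum_const_zero,
    NNReal.coe_one, one_mul, sum_sq_sum_mul_prod]

theorem map_sum_tuckerEntry_eq_studentT {ν : ℝ} (hν : 0 < ν) (t : ι → ℝ) (a : ι → ∀ k, α k → ℝ)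
    (hpos : 0 < hadamardQuadForm t fun k j j' => a j k ⬝ᵥ a j' k) :
    ((Measure.pi fun _ : ∀ k, α k => gaussianReal 0 1).prod (gammaMeasure (ν / 2) (ν / 2))).map
        (fun p => 1 / √p.2 * ∑ j, t j * tuckerEntry p.1 (a j)) =
      studentT ν (hadamardQuadForm t fun k j j' => a j k ⬝ᵥ a j' k) := by
  have := isProbabilityMeasure_gammaMeasure (half_pos hν) (half_pos hν)
  have hmeas : Measurable fun Z : (∀ k, α k) → ℝ => ∑ j, t j * tuckerEntry Z (a j) := by
    unfold tuckerEntry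
    fun_prop
  rw [studentT_eq_map hν hpos, ← pi_gaussianReal_map_sum_tuckerEntry,
    map_prod_map_left _ _ hmeas (by fun_prop)]

end Tucker

theorem tucker_t_process_convergence_general {ι κ X : Type*} [Fintype ι] [Fintype κ]
    [DecidableEq κ] {l : Filter X} {ν : ℝ} (hν : 0 < ν) (t : ι → ℝ) (Sig : κ → ι → ι → ℝ)
    (hpos : 0 < hadamardQuadForm t Sig) {α : X → κ → Type*} [∀ r k, Fintype (α r k)]
    (a : ∀ r, ι → ∀ k, α r k → ℝ)
    (hconv : ∀ k j j', Tendsto (fun r => a r j k ⬝ᵥ a r j' k) l (𝓝 (Sig k j j')))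
    (f : BoundedContinuousFunction ℝ ℝ) :
    Tendsto
      (fun r => ∫ y, f y ∂((Measure.pi fun _ : ∀ k, α r k => gaussianReal 0 1).prod
        (gammaMeasure (ν / 2) (ν / 2))).map
          (fun p => 1 / √p.2 * ∑ j, t j * tuckerEntry p.1 (a r j)))
      l (𝓝 (∫ y, f y ∂studentT ν (hadamardQuadForm t Sig))) := by
  have hscale := tendsto_hadamardQuadForm t hconv
  refine ((continuousAt_integral_studentT hν hpos f).tendsto.comp hscale).congr' ?_
  filter_upwards [hscale.eventually_const_lt hpos] with r hr
  rw [map_sum_tuckerEntry_eq_studentT hν t (a r) hr]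
  rfl

/-- Theorem 2, finite-dimensional marginal form: with a core
tensor distributed as a Gaussian/Gamma scale mixture (i.e. a tensor-variate t
with `ν` degrees of freedom), the law of the linear combination of the Tucker
tensor entries converges weakly, as the feature inner products converge to
`Sig k j j'`, to the Student t distribution with `ν` degrees of freedom and
scale `√(∑ j j', t j * t j' * ∏ k, Sig k j j')`. -/
theorem tucker_t_process_convergence
    (K m : ℕ) (hK : 1 ≤ K) (hm : 1 ≤ m) (ν : ℝ) (hν : 0 < ν)
    (t : Fin m → ℝ) (Sig : Fin K → Fin m → Fin m → ℝ)
    (hpos : 0 < ∑ j : Fin m, ∑ j' : Fin m,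
        t j * t j' * ∏ k : Fin K, Sig k j j')
    (d : ℕ → ℕ) (hd : ∀ r : ℕ, 1 ≤ d r)
    (a : (r : ℕ) → Fin m → Fin K → Fin (d r) → ℝ)
    (hconv : ∀ (k : Fin K) (j j' : Fin m),
      Tendsto (fun r : ℕ => ∑ x : Fin (d r), a r j k x * a r j' k x) atTop
        (nhds (Sig k j j')))
    (f : BoundedContinuousFunction ℝ ℝ) :
    Tendsto
      (fun r : ℕ => ∫ y, f y ∂(Measure.map
        (fun p : ((Fin K → Fin (d r)) → ℝ) × ℝ =>
          (1 / Real.sqrt p.2) *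
            ∑ j : Fin m, t j *
              ∑ i : Fin K → Fin (d r), p.1 i * ∏ k : Fin K, a r j k (i k))
        ((Measure.pi fun _ : Fin K → Fin (d r) => gaussianReal 0 1).prod
          (gammaMeasure (ν / 2) (ν / 2)))))
      atTop
      (nhds (∫ y, f y ∂(volume.withDensity (fun x : ℝ => ENNReal.ofReal
        (Real.Gamma ((ν + 1) / 2)
            / (Real.Gamma (ν / 2) * Real.sqrt (ν * Real.pi)
              * Real.sqrt (∑ j : Fin m, ∑ j' : Fin m,
                  t j * t j' * ∏ k : Fin K, Sig k j j'))
          * (1 + x ^ 2 / (ν * (∑ j : Fin m, ∑ j' : Fin m,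
                  t j * t j' * ∏ k : Fin K, Sig k j j')))
              ^ (-((ν + 1) / 2))))))) := by
  exact tucker_t_process_convergence_general hν t Sig hpos a hconv f
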